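/- Let T ≥ 1 and suppose the step size is constant η = η₀/√T with η ≤ 2/(3L) and the perturbation radius is ρ = ρ₀/√T. Consider iterates x_{t+1} = x_t − η g_t(x_t + ε_t), where each ε_t is any F_{t}-adapted perturbation satisfying ‖ε_t‖ = ρ. Then (1 − 3Lη/2) · (1/T) Σ_{t=0}^{T−1} E[‖∇f(x_t)‖²] ≤ (f(x₀) − f*)/(η₀√T) + Lρ₀²/(2η₀√T) + L³η₀ρ₀²/T^{3/2} + Lη₀σ²/√T; in particular (1/T) Σ_{t=0}^{T−1} E[‖∇f(x_t)‖²] = O(σ²/√T). -/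

import Mathlib

/-!
The `L`-smoothness of `f` gives the descent inequality
`f (x - η v) ≤ f x - η ⟪∇f x, v⟫ + (L η² / 2) ‖v‖²`. It is applied to `v = g_t(x_t + ε_t)`, split as
`∇f(x_t) + n_t + d_t`, where `n_t = g_t(x_t) - ∇f(x_t)` is the noise and
`d_t = g_t(x_t + ε_t) - g_t(x_t)` has norm at most `L ρ` by the Lipschitz assumption.
Young's inequality bounds `-η ⟪∇f, d⟫` by `(L/2)(η² ‖∇f‖² + ρ²)`, and
`‖v‖² ≤ 2 ‖∇f + n‖² + 2 ‖d‖²` (`sam_step_algebra`).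

In expectation the cross term `⟪∇f(x_t), n_t⟫` vanishes, since `∇f(x_t)` is `ℱ_t`-measurable and
`n_t` has conditional mean zero (`integral_inner_noise_eq_zero`), while `E‖n_t‖² ≤ σ²`. Hence
`η (1 - 3Lη/2) E‖∇f(x_t)‖² ≤ E f(x_t) - E f(x_{t+1}) + Lρ²/2 + L³η²ρ² + Lη²σ²`,
which telescopes; dividing by `η T` and inserting `η = η₀/√T`, `ρ = ρ₀/√T` gives the claim.
-/

open MeasureTheory Finset

/-- The descent lemma for a function with `L`-Lipschitz gradient. -/
lemma descent_of_lipschitz_gradient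
    {E : Type*} [NormedAddCommGroup E] [InnerProductSpace ℝ E] [CompleteSpace E]
    {f : E → ℝ} {L : ℝ} (hf : Differentiable ℝ f)
    (hgradLip : ∀ a b : E, ‖gradient f a - gradient f b‖ ≤ L * ‖a - b‖) (y v : E) :
    f (y + v) ≤ f y + inner ℝ (gradient f y) v + L / 2 * ‖v‖ ^ 2 := by
  have hderiv : ∀ s : ℝ,
      HasDerivAt (fun s : ℝ => f (y + s • v)) (inner ℝ (gradient f (y + s • v)) v) s := by
    intro s
    have h1 : HasDerivAt (fun s : ℝ => y + s • v) v s := by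
      simpa using ((hasDerivAt_id s).smul_const v).const_add y
    have h2 := (hf (y + s • v)).hasGradientAt.hasFDerivAt.comp_hasDerivAt s h1
    rw [InnerProductSpace.toDual_apply_apply] at h2
    exact h2
  have hbound : ∀ s : ℝ,
      HasDerivAt (fun s : ℝ => f y + s * inner ℝ (gradient f y) v + L / 2 * s ^ 2 * ‖v‖ ^ 2)
        (inner ℝ (gradient f y) v + L * s * ‖v‖ ^ 2) s := by
    intro s
    have h1 := ((hasDerivAt_id s).mul_const (inner ℝ (gradient f y) v)).const_add (f y)
    have h2 := (((hasDerivAt_id s).pow 2).const_mul (L / 2)).mul_const (‖v‖ ^ 2)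
    refine (h1.add h2).congr_deriv ?_
    simp only [id_eq, Nat.cast_ofNat, Nat.add_one_sub_one, pow_one]
    ring
  have key := image_le_of_deriv_right_le_deriv_boundary (a := 0) (b := 1)
    (f := fun s : ℝ => f (y + s • v))
    (fun s _ => (hderiv s).continuousAt.continuousWithinAt)
    (fun s _ => (hderiv s).hasDerivWithinAt)
    (B := fun s : ℝ => f y + s * inner ℝ (gradient f y) v + L / 2 * s ^ 2 * ‖v‖ ^ 2)
    (by simp)
    (fun s _ => (hbound s).continuousAt.continuousWithinAt)
    (fun s _ => (hbound s).hasDerivWithinAt)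
    (fun s hs => by
      have h1 : inner ℝ (gradient f (y + s • v) - gradient f y) v
          ≤ ‖gradient f (y + s • v) - gradient f y‖ * ‖v‖ := real_inner_le_norm _ _
      have h2 := hgradLip (y + s • v) y
      rw [add_sub_cancel_left, norm_smul, Real.norm_of_nonneg hs.1] at h2
      rw [inner_sub_left] at h1
      nlinarith [norm_nonneg v])
  simpa using key (Set.right_mem_Icc.2 zero_le_one)

/-- The algebraic part of one step: `G`, `n`, `d` stand for the gradient, the noise and the change
of the stochastic gradient under the perturbation. -/
lemma sam_step_algebra
    {E : Type*} [NormedAddCommGroup E] [InnerProductSpace ℝ E]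
    {L η ρ : ℝ} (hL : 0 ≤ L) (hη : 0 ≤ η) (G n d : E) (hd : ‖d‖ ≤ L * ρ) :
    -(η * inner ℝ G (G + n + d)) + L / 2 * η ^ 2 * ‖G + n + d‖ ^ 2 ≤
      -(η * (1 - 3 * L * η / 2)) * ‖G‖ ^ 2 + (2 * L * η ^ 2 - η) * inner ℝ G n
        + L * η ^ 2 * ‖n‖ ^ 2 + (L * ρ ^ 2 / 2 + L ^ 3 * η ^ 2 * ρ ^ 2) := by
  have h1 : ‖G + n + d‖ ^ 2 ≤ 2 * ‖G + n‖ ^ 2 + 2 * ‖d‖ ^ 2 := by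
    have := parallelogram_law_with_norm ℝ (G + n) d
    nlinarith [mul_self_nonneg ‖G + n - d‖]
  have h2 : ‖G + n‖ ^ 2 = ‖G‖ ^ 2 + 2 * inner ℝ G n + ‖n‖ ^ 2 := norm_add_sq_real G n
  have h3 : ‖d‖ ^ 2 ≤ (L * ρ) ^ 2 := pow_le_pow_left₀ (norm_nonneg d) hd 2
  have h4 : -inner ℝ G d ≤ ‖G‖ * (L * ρ) :=
    ((neg_le_abs _).trans (abs_real_inner_le_norm G d)).trans
      (mul_le_mul_of_nonneg_left hd (norm_nonneg G))
  have h5 : η * -inner ℝ G d ≤ η * (‖G‖ * (L * ρ)) := mul_le_mul_of_nonneg_left h4 hη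
  have h6 : 0 ≤ L / 2 * (η * ‖G‖ - ρ) ^ 2 := by positivity
  have h7 : L / 2 * η ^ 2 * ‖G + n + d‖ ^ 2 ≤
      L / 2 * η ^ 2 * (2 * (‖G‖ ^ 2 + 2 * inner ℝ G n + ‖n‖ ^ 2) + 2 * (L * ρ) ^ 2) :=
    mul_le_mul_of_nonneg_left (by linarith) (by positivity)
  rw [inner_add_right, inner_add_right, real_inner_self_eq_norm_sq]
  linarith

lemma integrable_inner_of_integrable_norm_sq
    {E : Type*} [NormedAddCommGroup E] [InnerProductSpace ℝ E]
    {Ω : Type*} [MeasurableSpace Ω] {μ : Measure Ω} {G N : Ω → E}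
    (hGm : AEStronglyMeasurable G μ) (hNm : AEStronglyMeasurable N μ)
    (hG : Integrable (fun ω => ‖G ω‖ ^ 2) μ) (hN : Integrable (fun ω => ‖N ω‖ ^ 2) μ) :
    Integrable (fun ω => inner ℝ (G ω) (N ω)) μ := by
  refine (hG.add hN).mono' (hGm.inner hNm) (Filter.Eventually.of_forall fun ω => ?_)
  have h := abs_real_inner_le_norm (G ω) (N ω)
  simp only [Real.norm_eq_abs, Pi.add_apply]
  nlinarith [sq_nonneg (‖G ω‖ - ‖N ω‖), sq_nonneg (‖G ω‖ + ‖N ω‖)]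

/-- An `m`-measurable vector is orthogonal in mean to the deviation of `X` from its conditional
mean. Here the vector is that conditional mean itself. -/
lemma integral_inner_noise_eq_zero
    {E : Type*} [NormedAddCommGroup E] [InnerProductSpace ℝ E] [CompleteSpace E]
    {Ω : Type*} {m m0 : MeasurableSpace Ω} {μ : Measure Ω} [IsFiniteMeasure μ] (hm : m ≤ m0)
    {G X : Ω → E} (hGm : StronglyMeasurable[m] G) (hX : Integrable X μ)
    (hcond : μ[X | m] =ᵐ[μ] G)
    (hint : Integrable (fun ω => inner ℝ (G ω) (X ω - G ω)) μ) :
    ∫ ω, inner ℝ (G ω) (X ω - G ω) ∂μ = 0 := by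
  have hG : Integrable G μ := integrable_condExp.congr hcond
  have h0 : μ[(fun ω => X ω - G ω) | m] =ᵐ[μ] 0 := by
    have h1 : μ[(fun ω => X ω - G ω) | m] =ᵐ[μ] μ[X | m] - μ[G | m] := condExp_sub hX hG m
    filter_upwards [h1, hcond] with ω h1 h2
    rw [h1, Pi.sub_apply, h2, condExp_of_stronglyMeasurable hm hGm hG, sub_self, Pi.zero_apply]
  have hpull := condExp_bilin_of_stronglyMeasurable_left (innerSL ℝ) hGm
    (g := fun ω => X ω - G ω) hint (hX.sub hG)
  rw [← integral_condExp hm]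
  refine integral_eq_zero_of_ae ?_
  filter_upwards [hpull, h0] with ω h1 h2
  exact h1.trans (by rw [h2, Pi.zero_apply, map_zero, Pi.zero_apply])

/-- Theorem 1, first part: SAM convergence.  With constant step size
`η = η₀/√T ≤ 2/(3L)` and radius `ρ = ρ₀/√T`, the iterates
`x_{t+1} = x_t - η g_t(x_t + ε_t)` (with any `F_t`-adapted perturbation `‖ε_t‖ = ρ`)
satisfy
`(1 - 3Lη/2) (1/T) Σ_{t<T} E[‖∇f(x_t)‖²]
   ≤ (f(x₀) - f*)/(η₀√T) + Lρ₀²/(2η₀√T) + L³η₀ρ₀²/T^{3/2} + Lη₀σ²/√T`,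
which is the explicit form of the `O(σ²/√T)` bound. -/
theorem sam_convergence
    {E : Type*} [NormedAddCommGroup E] [InnerProductSpace ℝ E] [FiniteDimensional ℝ E]
    {Ω : Type*} [m0 : MeasurableSpace Ω] (μ : Measure Ω) [IsProbabilityMeasure μ]
    (f : E → ℝ) (fstar L σ η₀ ρ₀ η ρ : ℝ) (T : ℕ) (x0 : E)
    (ℱ : ℕ → MeasurableSpace Ω)
    (x ε : ℕ → Ω → E) (g : ℕ → Ω → E → E)
    -- hyperparameters
    (hT : 1 ≤ T) (hL : 0 < L) (hη₀ : 0 < η₀) (hρ₀ : 0 ≤ ρ₀) (hσ : 0 ≤ σ)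
    (hη : η = η₀ / Real.sqrt T) (hηle : η ≤ 2 / (3 * L))
    (hρ : ρ = ρ₀ / Real.sqrt T)
    -- Assumption 1: lower bounded loss
    (hf : Differentiable ℝ f) (hlow : ∀ y, fstar ≤ f y)
    -- Assumption 2: smoothness (every realization, and hence ∇f, is L-Lipschitz)
    (hgLip : ∀ (t : ℕ) (ω : Ω) (a b : E), ‖g t ω a - g t ω b‖ ≤ L * ‖a - b‖)
    (hgradLip : ∀ a b : E, ‖gradient f a - gradient f b‖ ≤ L * ‖a - b‖)
    -- filtration and adaptedness
    (hle : ∀ t, ℱ t ≤ m0) (hmono : ∀ t, ℱ t ≤ ℱ (t + 1))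
    (hx_adapted : ∀ t, StronglyMeasurable[ℱ t] (x t))
    (hε_adapted : ∀ t, StronglyMeasurable[ℱ t] (ε t))
    -- Assumption 3: unbiasedness and bounded variance, conditioned on the past
    (hunbiased : ∀ t,
      μ[(fun ω => g t ω (x t ω)) | ℱ t] =ᵐ[μ] fun ω => gradient f (x t ω))
    (hvar : ∀ t, ∀ᵐ ω ∂μ,
      (μ[(fun ω' => ‖g t ω' (x t ω') - gradient f (x t ω')‖ ^ 2) | ℱ t]) ω ≤ σ ^ 2)
    -- the SAM/VASSO-type iteration
    (hx0 : ∀ ω, x 0 ω = x0)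
    (hεnorm : ∀ t ω, ‖ε t ω‖ = ρ)
    (hupdate : ∀ t ω, x (t + 1) ω = x t ω - η • g t ω (x t ω + ε t ω))
    -- integrability
    (hint_f : ∀ t, Integrable (fun ω => f (x t ω)) μ)
    (hint_grad : ∀ t, Integrable (fun ω => ‖gradient f (x t ω)‖ ^ 2) μ)
    (hint_g : ∀ t, Integrable (fun ω => g t ω (x t ω)) μ)
    (hint_pert : ∀ t, Integrable (fun ω => ‖g t ω (x t ω + ε t ω)‖ ^ 2) μ)
    (hint_var : ∀ t, Integrable (fun ω => ‖g t ω (x t ω) - gradient f (x t ω)‖ ^ 2) μ) :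
    (1 - 3 * L * η / 2) *
        ((1 / (T : ℝ)) * ∑ t ∈ Finset.range T, ∫ ω, ‖gradient f (x t ω)‖ ^ 2 ∂μ) ≤
      (f x0 - fstar) / (η₀ * Real.sqrt T) + L * ρ₀ ^ 2 / (2 * η₀ * Real.sqrt T) +
        L ^ 3 * η₀ * ρ₀ ^ 2 / (T : ℝ) ^ ((3 : ℝ) / 2) + L * η₀ * σ ^ 2 / Real.sqrt T := by
  have hTpos : (0 : ℝ) < T := by exact_mod_cast hT
  have hs : 0 < Real.sqrt T := Real.sqrt_pos.2 hTpos
  have hηpos : 0 < η := hη ▸ div_pos hη₀ hs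
  have hcont : Continuous (gradient f) :=
    (LipschitzWith.of_dist_le_mul (K := L.toNNReal) fun a b => by
      rw [dist_eq_norm, dist_eq_norm, Real.coe_toNNReal L hL.le]
      exact hgradLip a b).continuous
  have hGm : ∀ t, StronglyMeasurable[ℱ t] (fun ω => gradient f (x t ω)) := fun t =>
    hcont.comp_stronglyMeasurable (hx_adapted t)
  have hinner : ∀ t, Integrable (fun ω =>
      inner ℝ (gradient f (x t ω)) (g t ω (x t ω) - gradient f (x t ω))) μ := fun t =>
    integrable_inner_of_integrable_norm_sq ((hGm t).mono (hle t)).aestronglyMeasurable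
      ((hint_g t).aestronglyMeasurable.sub ((hGm t).mono (hle t)).aestronglyMeasurable)
      (hint_grad t) (hint_var t)
  have hvarint : ∀ t, ∫ ω, ‖g t ω (x t ω) - gradient f (x t ω)‖ ^ 2 ∂μ ≤ σ ^ 2 := by
    intro t
    rw [← integral_condExp (hle t)]
    calc _ ≤ ∫ _, σ ^ 2 ∂μ :=
          integral_mono_ae integrable_condExp (integrable_const _) (hvar t)
      _ = σ ^ 2 := by simp
  have hstep : ∀ t, η * (1 - 3 * L * η / 2) * ∫ ω, ‖gradient f (x t ω)‖ ^ 2 ∂μ ≤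
      (∫ ω, f (x t ω) ∂μ) - (∫ ω, f (x (t + 1) ω) ∂μ)
        + (L * ρ ^ 2 / 2 + L ^ 3 * η ^ 2 * ρ ^ 2 + L * η ^ 2 * σ ^ 2) := by
    intro t
    have hpt : ∀ ω, f (x (t + 1) ω) ≤
        f (x t ω) + (-(η * (1 - 3 * L * η / 2)) * ‖gradient f (x t ω)‖ ^ 2
          + ((2 * L * η ^ 2 - η)
              * inner ℝ (gradient f (x t ω)) (g t ω (x t ω) - gradient f (x t ω))
          + (L * η ^ 2 * ‖g t ω (x t ω) - gradient f (x t ω)‖ ^ 2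
          + (L * ρ ^ 2 / 2 + L ^ 3 * η ^ 2 * ρ ^ 2)))) := by
      intro ω
      have hd : ‖g t ω (x t ω + ε t ω) - g t ω (x t ω)‖ ≤ L * ρ := by
        simpa [hεnorm t ω] using hgLip t ω (x t ω + ε t ω) (x t ω)
      have h1 := sam_step_algebra hL.le hηpos.le (gradient f (x t ω))
        (g t ω (x t ω) - gradient f (x t ω)) _ hd
      have h2 := descent_of_lipschitz_gradient hf hgradLip (x t ω)
        (-(η • g t ω (x t ω + ε t ω)))
      rw [← sub_eq_add_neg, ← hupdate, inner_neg_right, inner_smul_right, norm_neg, norm_smul,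
        mul_pow, Real.norm_eq_abs, sq_abs] at h2
      rw [add_sub_cancel, add_sub_cancel] at h1
      linarith
    have hi1 := (hint_grad t).const_mul (-(η * (1 - 3 * L * η / 2)))
    have hi2 := (hinner t).const_mul (2 * L * η ^ 2 - η)
    have hi3 := (hint_var t).const_mul (L * η ^ 2)
    have hi4 : Integrable (fun _ : Ω => L * ρ ^ 2 / 2 + L ^ 3 * η ^ 2 * ρ ^ 2) μ :=
      integrable_const _
    have hi34 := hi3.fun_add hi4
    have hi234 := hi2.fun_add hi34
    have hi1234 := hi1.fun_add hi234
    have hI := integral_mono (hint_f (t + 1)) ((hint_f t).fun_add hi1234) hpt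
    rw [integral_add (hint_f t) hi1234, integral_add hi1 hi234, integral_add hi2 hi34,
      integral_add hi3 hi4,
      integral_const_mul, integral_const_mul, integral_const_mul,
      integral_inner_noise_eq_zero (hle t) (hGm t) (hint_g t) (hunbiased t) (hinner t)] at hI
    simp only [integral_const, probReal_univ, one_smul] at hI
    have := mul_le_mul_of_nonneg_left (hvarint t) (by positivity : 0 ≤ L * η ^ 2)
    linarith
  have hsum := Finset.sum_le_sum fun t (_ : t ∈ Finset.range T) => hstep t
  rw [← Finset.mul_sum, Finset.sum_add_distrib, Finset.sum_range_sub', Finset.sum_const,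
    Finset.card_range, nsmul_eq_mul] at hsum
  have h0 : ∫ ω, f (x 0 ω) ∂μ = f x0 := by simp [hx0]
  have hTlow : fstar ≤ ∫ ω, f (x T ω) ∂μ := by
    simpa using integral_mono (integrable_const fstar) (hint_f T) fun ω => hlow (x T ω)
  rw [h0] at hsum
  set S := ∑ t ∈ Finset.range T, ∫ ω, ‖gradient f (x t ω)‖ ^ 2 ∂μ with hS
  have hpow : (T : ℝ) ^ ((3 : ℝ) / 2) = Real.sqrt T ^ 3 := by
    rw [Real.sqrt_eq_rpow, ← Real.rpow_natCast, ← Real.rpow_mul hTpos.le]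
    norm_num
  have hTs : (T : ℝ) = Real.sqrt T ^ 2 := (Real.sq_sqrt hTpos.le).symm
  have hrhs : (f x0 - fstar) / (η₀ * Real.sqrt T) + L * ρ₀ ^ 2 / (2 * η₀ * Real.sqrt T) +
        L ^ 3 * η₀ * ρ₀ ^ 2 / (T : ℝ) ^ ((3 : ℝ) / 2) + L * η₀ * σ ^ 2 / Real.sqrt T =
      (f x0 - fstar
        + T * (L * ρ ^ 2 / 2 + L ^ 3 * η ^ 2 * ρ ^ 2 + L * η ^ 2 * σ ^ 2)) / (η * T) := by
    rw [hpow, hη, hρ]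
    generalize Real.sqrt T = s at hs hTs
    rw [hTs]
    field_simp
    ring
  rw [hrhs, le_div_iff₀ (by positivity)]
  calc _ = η * (1 - 3 * L * η / 2) * S := by field_simp
    _ ≤ _ := by linarith
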